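/- arXiv:2502.12307 — 2 statements merged into one kernel-verified Lean document; each statement's English description precedes it below -/
import Mathlib

section
/- Schnorr–Stimm theorem for Bernoulli measures: for X ∈ A^ω and a positive Bernoulli measure μ, X is μ-normal if and only if no μ-gambler wins by betting on X (i.e., every μ-gambler 𝒢 has sup_n capital(𝒢, X[0..n]) < ∞). This may assume the Agafonov theorem for Bernoulli measures as a hypothesis. -/
open Filter Topology

/-- The prefix `X(0) X(1) ⋯ X(n-1)` of an infinite sequence, as a list. -/
def pref {A : Type*} (X : ℕ → A) (n : ℕ) : List A := (List.range n).map X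

/-- Number of occurrences of the word `w` in the prefix `X[0..n]`
(indices `i` with `0 ≤ i ≤ n - |w| + 1`). -/
def nbocc {A : Type*} [DecidableEq A] (w : List A) (X : ℕ → A) (n : ℕ) : ℕ :=
  ((Finset.range (n + 2 - w.length)).filter
    (fun i => (List.range w.length).map (fun j => X (i + j)) = w)).card

/-- Frequency of occurrences of `w` in `X[0..n]`. -/
noncomputable def freq {A : Type*} [DecidableEq A] (w : List A) (X : ℕ → A) (n : ℕ) : ℝ :=
  (nbocc w X n : ℝ) / ((n + 2 - w.length : ℕ) : ℝ)

/-- The Bernoulli measure of a word: product of the measures of its letters. -/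
def wmeas {A : Type*} (μ : A → ℝ) (w : List A) : ℝ := (w.map μ).prod

/-- `X` is `μ`-normal: every nonempty word occurs with asymptotic frequency `μ(w)`. -/
def BNormal {A : Type*} [DecidableEq A] (μ : A → ℝ) (X : ℕ → A) : Prop :=
  ∀ w : List A, w ≠ [] → Tendsto (fun n => freq w X n) atTop (𝓝 (wmeas μ w))

/-- Iterated transition function of a deterministic automaton. -/
def dstar {Q A : Type*} (δ : Q → A → Q) (q : Q) (w : List A) : Q := w.foldl δ q

/-- Capital of an automatic gambler started in state `q` after reading `w`. -/
def capital {Q A : Type*} (δ : Q → A → Q) (γ : Q → A → ℝ) : Q → List A → ℝ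
  | _, [] => 1
  | q, a :: w => γ q a * capital δ γ (δ q a) w

section helpers

theorem ss_bdd_of_eventually (f : ℕ → ℝ) (N : ℕ) (C : ℝ) (h : ∀ n, N ≤ n → f n ≤ C) :
    ∃ C', ∀ n, f n ≤ C' := by
  have hb : IsBoundedUnder (· ≤ ·) atTop f := ⟨C, by
    rw [eventually_map]; exact eventually_atTop.2 ⟨N, h⟩⟩
  obtain ⟨C', hC⟩ := hb.bddAbove_range
  exact ⟨C', fun n => hC ⟨n, rfl⟩⟩

theorem ss_pref_succ {A : Type*} (X : ℕ → A) (n : ℕ) : pref X (n+1) = pref X n ++ [X n] := by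
  simp [pref, List.range_succ]

theorem ss_dstar_succ {Q A : Type*} (δ : Q → A → Q) (q : Q) (X : ℕ → A) (n : ℕ) :
    dstar δ q (pref X (n+1)) = δ (dstar δ q (pref X n)) (X n) := by
  simp [dstar, ss_pref_succ]

theorem ss_capital_append {Q A : Type*} (δ : Q → A → Q) (γ : Q → A → ℝ) (w : List A) (a : A) :
    ∀ q, capital δ γ q (w ++ [a]) = capital δ γ q w * γ (dstar δ q w) a := by
  induction w with
  | nil => intro q; simp [capital, dstar]
  | cons b w ih =>
    intro q
    simp only [List.cons_append, capital, ih, dstar, List.foldl_cons]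
    ring

theorem ss_capital_prod {Q A : Type*} (δ : Q → A → Q) (γ : Q → A → ℝ) (q : Q) (X : ℕ → A)
    (n : ℕ) : capital δ γ q (pref X n) =
      ∏ t ∈ Finset.range n, γ (dstar δ q (pref X t)) (X t) := by
  induction n with
  | zero => simp [pref, capital]
  | succ n ih => rw [ss_pref_succ, ss_capital_append, ih, Finset.prod_range_succ]

theorem ss_G_bdd {A : Type*} [Fintype A] [DecidableEq A]
    (μ : A → ℝ) (hμpos : ∀ a, 0 < μ a) (hμsum : ∑ a, μ a = 1)
    (Y : ℕ → A) (g : A → ℝ) (hg : ∀ a, 0 ≤ g a) (hg1 : ∑ a, μ a * g a = 1)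
    (hY : ∀ a : A, Tendsto
            (fun k => (((Finset.range k).filter (fun j => Y j = a)).card : ℝ) / k)
            atTop (𝓝 (μ a))) :
    ∃ C, ∀ k, ∏ j ∈ Finset.range k, g (Y j) ≤ C := by
  by_cases h0 : ∃ a, g a = 0
  · obtain ⟨a, ha⟩ := h0
    have h1 := (hY a).eventually (lt_mem_nhds (hμpos a))
    obtain ⟨k, hk⟩ := h1.exists
    have : ∃ j, Y j = a := by
      by_contra hcon
      push Not at hcon
      simp [hcon] at hk
    obtain ⟨j, hj⟩ := this
    refine ss_bdd_of_eventually _ (j+1) 0 (fun n hn => le_of_eq ?_)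
    exact Finset.prod_eq_zero (i := j) (Finset.mem_range.2 (by omega)) (by rw [hj, ha])
  push Not at h0
  have hpos : ∀ a, 0 < g a := fun a => lt_of_le_of_ne (hg a) (h0 a).symm
  by_cases h1 : ∀ a, g a = 1
  · exact ⟨1, fun k => by simp [h1]⟩
  push Not at h1
  obtain ⟨a, ha⟩ := h1
  have hneg : ∑ a, μ a * Real.log (g a) < 0 := by
    calc ∑ a, μ a * Real.log (g a) < ∑ a, μ a * (g a - 1) := by
          apply Finset.sum_lt_sum
          · intro b _
            exact mul_le_mul_of_nonneg_left (Real.log_le_sub_one_of_pos (hpos b)) (hμpos b).le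
          · exact ⟨a, Finset.mem_univ _, mul_lt_mul_of_pos_left
              (Real.log_lt_sub_one_of_pos (hpos a) ha) (hμpos a)⟩
      _ = 0 := by
          simp only [mul_sub, mul_one, Finset.sum_sub_distrib, hg1, hμsum, sub_self]
  have hlim : Tendsto (fun k : ℕ => ∑ a, (((Finset.range k).filter (fun j => Y j = a)).card : ℝ) / k
      * Real.log (g a)) atTop (𝓝 (∑ a, μ a * Real.log (g a))) :=
    tendsto_finsetSum _ (fun a _ => (hY a).mul_const _)
  have hev := hlim.eventually (gt_mem_nhds hneg)
  obtain ⟨N, hN⟩ := eventually_atTop.1 hev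
  refine ss_bdd_of_eventually _ (N+1) 1 (fun k hk => ?_)
  have hk0 : (0:ℝ) < k := by exact_mod_cast (by omega : 0 < k)
  have hlog : Real.log (∏ j ∈ Finset.range k, g (Y j)) =
      k * ∑ a, (((Finset.range k).filter (fun j => Y j = a)).card : ℝ) / k * Real.log (g a) := by
    rw [Real.log_prod (fun j _ => (hpos _).ne'), Finset.mul_sum,
      ← Finset.sum_fiberwise (Finset.range k) Y]
    apply Finset.sum_congr rfl
    intro b _
    rw [Finset.sum_congr rfl (g := fun _ => Real.log (g b))
      (fun j hj => by rw [(Finset.mem_filter.1 hj).2])]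
    rw [Finset.sum_const, nsmul_eq_mul]
    field_simp
  rw [← Real.log_nonpos_iff (Finset.prod_nonneg (fun j _ => hg _)), hlog]
  have := hN k (by omega)
  nlinarith

theorem ss_reindex {A : Type*} (T : Set ℕ) [DecidablePred (· ∈ T)] (φ : ℕ → ℕ) (hφ : StrictMono φ)
    (hr : Set.range φ = T) (g : A → ℝ) (X : ℕ → A) (n : ℕ) :
    ∃ k, (∀ j, j < k ↔ φ j < n) ∧
      ∏ t ∈ Finset.range n, (if t ∈ T then g (X t) else 1) = ∏ j ∈ Finset.range k, g (X (φ j)) := by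
  induction n with
  | zero => exact ⟨0, by simp, by simp⟩
  | succ n ih =>
    obtain ⟨k, hk, he⟩ := ih
    by_cases hn : n ∈ T
    · obtain ⟨j, hj⟩ : n ∈ Set.range φ := hr ▸ hn
      have hjk : j = k := by
        rcases lt_trichotomy j k with h | h | h
        · have := (hk j).1 h; omega
        · exact h
        · have := (hk k).2 (hj ▸ hφ h); omega
      subst hjk
      refine ⟨j+1, fun i => ?_, ?_⟩
      · rw [Nat.lt_succ_iff, Nat.lt_succ_iff, ← hj, hφ.le_iff_le]
      · rw [Finset.prod_range_succ, Finset.prod_range_succ, he, if_pos hn, hj]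
    · refine ⟨k, fun i => ?_, ?_⟩
      · rw [hk]
        have : φ i ≠ n := fun h => hn (hr ▸ ⟨i, h⟩)
        omega
      · rw [Finset.prod_range_succ, he, if_neg hn, mul_one]

theorem ss_finite_bdd (T : Set ℕ) [DecidablePred (· ∈ T)] (hT : T.Finite) (f : ℕ → ℝ) :
    ∃ C, ∀ n, ∏ t ∈ Finset.range n, (if t ∈ T then f t else 1) ≤ C := by
  obtain ⟨N, hN⟩ := hT.bddAbove
  refine ss_bdd_of_eventually _ (N+1)
    (∏ t ∈ Finset.range (N+1), (if t ∈ T then f t else 1)) (fun n hn => le_of_eq ?_)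
  symm
  apply Finset.prod_subset (Finset.range_subset_range.2 hn)
  intro t _ ht
  rw [if_neg]
  intro h
  have := hN h
  simp at ht
  omega

/-- capital boundedness transported to an arbitrary finite state type -/
theorem ss_transport {A : Type*} [Fintype A] (μ : A → ℝ) (X : ℕ → A)
    (H : ∀ (m : ℕ) (δ : Fin m → A → Fin m) (qI : Fin m) (γ : Fin m → A → ℝ),
        (∀ q a, 0 ≤ γ q a) → (∀ q, ∑ a, μ a * γ q a = 1) →
        ∃ C : ℝ, ∀ n, capital δ γ qI (pref X n) ≤ C)
    {Q : Type*} [Fintype Q] (δ : Q → A → Q) (γ : Q → A → ℝ) (s : ℕ → Q)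
    (hs : ∀ n, s (n+1) = δ (s n) (X n))
    (h0 : ∀ q a, 0 ≤ γ q a) (h1 : ∀ q, ∑ a, μ a * γ q a = 1) :
    ∃ C : ℝ, ∀ n, ∏ t ∈ Finset.range n, γ (s t) (X t) ≤ C := by
  let e := Fintype.equivFin Q
  obtain ⟨C, hC⟩ := H (Fintype.card Q) (fun q a => e (δ (e.symm q) a)) (e (s 0))
    (fun q a => γ (e.symm q) a) (fun q a => h0 _ a) (fun q => h1 _)
  refine ⟨C, fun n => ?_⟩
  have := hC n
  rw [ss_capital_prod] at this
  have hst : ∀ t, dstar (fun q a => e (δ (e.symm q) a)) (e (s 0)) (pref X t) = e (s t) := by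
    intro t
    induction t with
    | zero => simp [pref, dstar]
    | succ t ih => rw [ss_dstar_succ, ih, hs]; simp
  simpa [hst] using this

theorem ss_exp_le {x : ℝ} (hx : |x| ≤ 1/2) : Real.exp (x - 2 * x^2) ≤ 1 + x := by
  have h := abs_le.1 hx
  have h1 : 0 < 1 + x := by linarith
  rw [← Real.le_log_iff_exp_le h1]
  refine le_trans ?_ (Real.one_sub_inv_le_log_of_pos h1)
  have : (1+x)⁻¹ ≤ 1 - x + 2 * x^2 := by
    rw [inv_le_iff_one_le_mul₀ h1]
    nlinarith [mul_nonneg (sq_nonneg x) (by linarith : 0 ≤ 1 + 2 * x)]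
  linarith

/-- The word `u` occurs in `X` at position `i`. -/
def ssOcc {A : Type*} (X : ℕ → A) (u : List A) (i : ℕ) : Prop :=
  (List.range u.length).map (fun j => X (i + j)) = u

instance {A : Type*} [DecidableEq A] (X : ℕ → A) (u : List A) : DecidablePred (ssOcc X u) :=
  fun i => inferInstanceAs (Decidable ((List.range u.length).map (fun j => X (i + j)) = u))

theorem ss_occ_snoc {A : Type*} (X : ℕ → A) (u : List A) (a : A) (i : ℕ) :
    ssOcc X (u ++ [a]) i ↔ ssOcc X u i ∧ X (i + u.length) = a := by
  unfold ssOcc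
  rw [List.length_append, List.length_singleton, List.range_succ, List.map_append]
  constructor
  · intro h
    obtain ⟨h1, h2⟩ := List.append_inj h (by simp)
    exact ⟨h1, by simpa using h2⟩
  · rintro ⟨h1, h2⟩
    rw [h1]
    simp [h2]

/-- Number of occurrences of `u` at positions `< n`. -/
def ssM {A : Type*} [DecidableEq A] (X : ℕ → A) (u : List A) (n : ℕ) : ℕ :=
  ((Finset.range n).filter (ssOcc X u)).card

/-- Sum of the deviations. -/
noncomputable def ssD {A : Type*} [DecidableEq A] (μ : A → ℝ) (X : ℕ → A) (u : List A) (a : A)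
    (i : ℕ) : ℝ := if ssOcc X u i then ((if X (i + u.length) = a then 1 else 0) - μ a) else 0

theorem ss_sum_D {A : Type*} [DecidableEq A] (μ : A → ℝ) (X : ℕ → A) (u : List A) (a : A)
    (n : ℕ) : ∑ i ∈ Finset.range n, ssD μ X u a i =
      (ssM X (u ++ [a]) n : ℝ) - μ a * ssM X u n := by
  unfold ssM
  rw [Finset.card_filter, Finset.card_filter]
  push_cast
  rw [Finset.mul_sum, ← Finset.sum_sub_distrib]
  apply Finset.sum_congr rfl
  intro i _
  unfold ssD
  by_cases h1 : ssOcc X u i <;> by_cases h2 : X (i + u.length) = a <;>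
    simp [ss_occ_snoc, h1, h2]

/-- window states -/
def ssWin {A : Type*} (X : ℕ → A) (L : ℕ) (n : ℕ) : Fin L → Option A :=
  fun i => if L ≤ n + i then some (X (n + i - L)) else none

theorem ss_win_target {A : Type*} (X : ℕ → A) (u : List A) (i : ℕ) :
    (ssWin X u.length (u.length + i) = fun j => some u[j]) ↔ ssOcc X u i := by
  unfold ssOcc ssWin
  constructor
  · intro h
    apply List.ext_getElem (by simp)
    intro j h1 h2
    have := congrFun h ⟨j, h2⟩
    simp only at this
    rw [if_pos (by omega), show u.length + i + j - u.length = i + j by omega] at this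
    simpa using this
  · intro h
    funext j
    rw [if_pos (by omega), show u.length + i + j - u.length = i + j by omega]
    congr 1
    have h2 := List.getElem_of_eq h (i := j) (by simp)
    simpa using h2

theorem ss_gamble {A : Type*} [Fintype A] [DecidableEq A] (μ : A → ℝ)
    (hμpos : ∀ a, 0 < μ a) (hμsum : ∑ a, μ a = 1) (X : ℕ → A)
    (H : ∀ (m : ℕ) (δ : Fin m → A → Fin m) (qI : Fin m) (γ : Fin m → A → ℝ),
        (∀ q a, 0 ≤ γ q a) → (∀ q, ∑ a, μ a * γ q a = 1) →
        ∃ C : ℝ, ∀ n, capital δ γ qI (pref X n) ≤ C)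
    (u : List A) (a : A) (ε : ℝ) (hε : |ε| ≤ 1/2) :
    ∃ C : ℝ, ∀ n : ℕ, ε * ∑ i ∈ Finset.range n, ssD μ X u a i ≤ C + 2 * ε^2 * n := by
  classical
  have hμ1 : ∀ b, μ b ≤ 1 := fun b => by
    rw [← hμsum]
    exact Finset.single_le_sum (fun c _ => (hμpos c).le) (Finset.mem_univ b)
  have hbd : ∀ b, |(if b = a then (1:ℝ) else 0) - μ a| ≤ 1 := by
    intro b
    have := hμ1 a
    have := hμpos a
    rw [abs_le]
    split_ifs <;> constructor <;> linarith
  have hprod : ∀ x : ℝ, |x| ≤ 1 → |ε * x| ≤ 1/2 := fun x hx => by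
    rw [abs_mul]; nlinarith [abs_nonneg ε, abs_nonneg x]
  let δ : (Fin u.length → Option A) → A → (Fin u.length → Option A) :=
    fun s b i => if h : i.1 + 1 < u.length then s ⟨i.1 + 1, h⟩ else some b
  let γ : (Fin u.length → Option A) → A → ℝ := fun s b =>
    if s = (fun j => some u[j]) then 1 + ε * ((if b = a then (1:ℝ) else 0) - μ a) else 1
  obtain ⟨C, hC⟩ := ss_transport μ X H δ γ (ssWin X u.length)
    (by
      intro n
      funext i
      have hi := i.2
      simp only [δ, ssWin]
      split_ifs with h1 h2 h3 h4
      all_goals first | rfl | omega | (congr 2; omega))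
    (by
      intro s b
      simp only [γ]
      split_ifs with h1 h2
      all_goals first | norm_num; done | skip
      · have := abs_le.1 (hprod _ (hbd a))
        simp only [if_true] at this
        linarith
      · have := abs_le.1 (hprod _ (hbd b))
        simp only [h2, if_false] at this
        linarith)
    (by
      intro s
      simp only [γ]
      split_ifs with h1
      · simp only [mul_add, mul_one, Finset.sum_add_distrib, hμsum]
        have : ∀ b, μ b * (ε * ((if b = a then (1:ℝ) else 0) - μ a)) =
            ε * (if b = a then μ b else 0) - ε * μ a * μ b := by
          intro b; split_ifs <;> ring
        simp only [this, Finset.sum_sub_distrib, ← Finset.mul_sum, hμsum]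
        simp
      · simpa using hμsum)
  have hγpos : ∀ s b, 0 < γ s b := by
    intro s b
    simp only [γ]
    have := abs_le.1 (hprod _ (hbd b))
    split_ifs at this ⊢ <;> linarith
  have hval : ∀ i, γ (ssWin X u.length (u.length + i)) (X (u.length + i)) =
      1 + ε * ssD μ X u a i := by
    intro i
    have hw := ss_win_target X u i
    simp only [γ, ssD, Nat.add_comm i u.length]
    by_cases h : ssOcc X u i
    · rw [if_pos (hw.2 h), if_pos h]
    · rw [if_neg (fun h' => h (hw.1 h')), if_neg h, mul_zero, add_zero]
  have hDabs : ∀ i, |ssD μ X u a i| ≤ 1 := by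
    intro i
    unfold ssD
    by_cases h : ssOcc X u i
    · rw [if_pos h]; exact hbd _
    · rw [if_neg h]; simp
  set P := ∏ t ∈ Finset.range u.length, γ (ssWin X u.length t) (X t) with hP
  have hPpos : 0 < P := Finset.prod_pos (fun t _ => hγpos _ _)
  refine ⟨Real.log (C / P), fun n => ?_⟩
  have h1 := hC (u.length + n)
  rw [Finset.prod_range_add, ← hP] at h1
  simp only [hval] at h1
  have h2 : Real.exp (∑ i ∈ Finset.range n, (ε * ssD μ X u a i - 2 * ε^2)) ≤ C / P := by
    rw [le_div_iff₀ hPpos, mul_comm]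
    refine le_trans (mul_le_mul_of_nonneg_left ?_ hPpos.le) h1
    rw [Real.exp_sum]
    apply Finset.prod_le_prod (fun _ _ => (Real.exp_pos _).le)
    intro i _
    refine le_trans (Real.exp_le_exp.2 ?_) (ss_exp_le (hprod _ (hDabs i)))
    have h3 : ssD μ X u a i ^ 2 ≤ 1 := by
      rw [sq_le_one_iff_abs_le_one]; exact hDabs i
    have : (ε * ssD μ X u a i)^2 ≤ ε^2 := by
      rw [mul_pow]; nlinarith [sq_nonneg ε]
    linarith
  have h4 := (Real.le_log_iff_exp_le (lt_of_lt_of_le (Real.exp_pos _) h2)).2 h2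
  rw [Finset.sum_sub_distrib, ← Finset.mul_sum, Finset.sum_const, Finset.card_range,
    nsmul_eq_mul] at h4
  linarith

theorem ss_tendsto_zero (S : ℕ → ℝ)
    (h : ∀ ε : ℝ, |ε| ≤ 1/2 → ∃ C : ℝ, ∀ n : ℕ, ε * S n ≤ C + 2 * ε^2 * n) :
    Tendsto (fun n : ℕ => S n / n) atTop (𝓝 0) := by
  rw [Metric.tendsto_atTop]
  intro η hη
  obtain ⟨ε, hε0, hε1, hε2⟩ : ∃ ε : ℝ, 0 < ε ∧ ε ≤ 1/2 ∧ 4 * ε ≤ η := by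
    refine ⟨min (1/2) (η/4), by positivity, min_le_left _ _, ?_⟩
    have := min_le_right (1/2) (η/4)
    linarith
  obtain ⟨C1, h1⟩ := h ε (by rw [abs_of_pos hε0]; exact hε1)
  obtain ⟨C2, h2⟩ := h (-ε) (by rw [abs_neg, abs_of_pos hε0]; exact hε1)
  obtain ⟨N, hN⟩ := exists_nat_gt (max C1 C2 / ε^2)
  refine ⟨N + 1, fun n hn => ?_⟩
  have hn0 : (0:ℝ) < n := by exact_mod_cast (by omega : 0 < n)
  have hNn : (N:ℝ) ≤ n := by exact_mod_cast (by omega : N ≤ n)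
  have hM : max C1 C2 < ε^2 * n := by
    have := (div_lt_iff₀ (by positivity)).1 (lt_of_lt_of_le hN hNn)
    linarith
  have hM1 := lt_of_le_of_lt (le_max_left C1 C2) hM
  have hM2 := lt_of_le_of_lt (le_max_right C1 C2) hM
  have h1n := h1 n
  have h2n := h2 n
  have e1 : ε * S n < ε * (3 * ε * n) := by nlinarith
  have e2 : ε * (- S n) < ε * (3 * ε * n) := by nlinarith
  have e3 := lt_of_mul_lt_mul_left e1 hε0.le
  have e4 := lt_of_mul_lt_mul_left e2 hε0.le
  rw [Real.dist_eq, sub_zero, abs_lt, lt_div_iff₀ hn0, div_lt_iff₀ hn0]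
  constructor <;> nlinarith

theorem ss_M_tendsto {A : Type*} [Fintype A] [DecidableEq A] (μ : A → ℝ)
    (hμpos : ∀ a, 0 < μ a) (hμsum : ∑ a, μ a = 1) (X : ℕ → A)
    (H : ∀ (m : ℕ) (δ : Fin m → A → Fin m) (qI : Fin m) (γ : Fin m → A → ℝ),
        (∀ q a, 0 ≤ γ q a) → (∀ q, ∑ a, μ a * γ q a = 1) →
        ∃ C : ℝ, ∀ n, capital δ γ qI (pref X n) ≤ C)
    (u : List A) : Tendsto (fun n : ℕ => (ssM X u n : ℝ) / n) atTop (𝓝 (wmeas μ u)) := by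
  induction u using List.reverseRecOn with
  | nil =>
    refine tendsto_const_nhds.congr' ?_
    filter_upwards [eventually_gt_atTop 0] with n hn
    have hn0 : (n:ℝ) ≠ 0 := by exact_mod_cast hn.ne'
    have hall : ∀ i, ssOcc X [] i := fun i => by simp [ssOcc]
    simp [ssM, hall, wmeas, hn0]
  | append_singleton u a ih =>
    have h0 := ss_tendsto_zero _ (fun ε hε => ss_gamble μ hμpos hμsum X H u a ε hε)
    have h1 := h0.add (ih.const_mul (μ a))
    have h2 : wmeas μ (u ++ [a]) = 0 + μ a * wmeas μ u := by
      simp [wmeas, mul_comm]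
    rw [h2]
    refine h1.congr (fun n => ?_)
    rw [ss_sum_D]
    ring

end helpers

/-- Schnorr–Stimm theorem for Bernoulli measures: assuming as a
hypothesis the Agafonov theorem for Bernoulli measures (every automatic selector,
applied to a `μ`-normal sequence, selects a subsequence that is finite or
`μ`-balanced), a sequence `X` is `μ`-normal if and only if every `μ`-gambler has
bounded capital while betting on `X`. -/
theorem schnorr_stimm_bernoulli
    {A : Type*} [Fintype A] [DecidableEq A]
    (μ : A → ℝ) (hμpos : ∀ a, 0 < μ a) (hμsum : ∑ a, μ a = 1)
    (X : ℕ → A)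
    (hAgafonov : ∀ (X' : ℕ → A), BNormal μ X' →
      ∀ (m : ℕ) (δ : Fin m → A → Fin m) (qI : Fin m) (S : Finset (Fin m)),
        {i : ℕ | dstar δ qI (pref X' i) ∈ S}.Finite ∨
        ∃ φ : ℕ → ℕ, StrictMono φ ∧
          Set.range φ = {i : ℕ | dstar δ qI (pref X' i) ∈ S} ∧
          ∀ a : A, Tendsto
            (fun k => (((Finset.range k).filter (fun j => X' (φ j) = a)).card : ℝ) / k)
            atTop (𝓝 (μ a))) :
    BNormal μ X ↔
      ∀ (m : ℕ) (δ : Fin m → A → Fin m) (qI : Fin m) (γ : Fin m → A → ℝ),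
        (∀ q a, 0 ≤ γ q a) → (∀ q, ∑ a, μ a * γ q a = 1) →
        ∃ C : ℝ, ∀ n, capital δ γ qI (pref X n) ≤ C := by
  classical
  constructor
  · intro hX m δ qI γ h0 h1
    have hq : ∀ q : Fin m, ∃ C : ℝ, ∀ n, ∏ t ∈ Finset.range n,
        (if t ∈ {i : ℕ | dstar δ qI (pref X i) ∈ ({q} : Finset (Fin m))} then γ q (X t) else 1)
          ≤ C := by
      intro q
      rcases hAgafonov X hX m δ qI {q} with hf | ⟨φ, hφ, hr, hlim⟩
      · exact ss_finite_bdd _ hf _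
      · obtain ⟨C, hC⟩ := ss_G_bdd μ hμpos hμsum (fun j => X (φ j)) (γ q) (h0 q) (h1 q) hlim
        refine ⟨C, fun n => ?_⟩
        obtain ⟨k, -, hk⟩ := ss_reindex _ φ hφ hr (γ q) X n
        rw [hk]
        exact hC k
    choose C hC using hq
    refine ⟨∏ q, C q, fun n => ?_⟩
    rw [ss_capital_prod]
    have : ∏ t ∈ Finset.range n, γ (dstar δ qI (pref X t)) (X t) =
        ∏ q, ∏ t ∈ Finset.range n,
        (if t ∈ {i : ℕ | dstar δ qI (pref X i) ∈ ({q} : Finset (Fin m))} then γ q (X t) else 1) := by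
      rw [Finset.prod_comm]
      apply Finset.prod_congr rfl
      intro t _
      simp
    rw [this]
    apply Finset.prod_le_prod
    · intro q _
      apply Finset.prod_nonneg
      intro t _
      split_ifs
      · exact h0 _ _
      · exact zero_le_one
    · intro q _
      exact hC q n
  · intro H w hw
    have h := ss_M_tendsto μ hμpos hμsum X H w
    have ht : Tendsto (fun n : ℕ => n + 2 - w.length) atTop atTop :=
      tendsto_atTop.2 (fun b => by
        filter_upwards [eventually_ge_atTop (b + w.length)] with n hn
        omega)
    refine (h.comp ht).congr (fun n => ?_)
    simp only [Function.comp, freq, nbocc, ssM]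
    rfl
end

section
/- Ergodic frequency of state visits on μ-normal input: let (Q, A, q_I, δ) be a deterministic finite automaton, μ a positive Bernoulli measure on A, and V_q(n, X) the number of indices 0 ≤ i < n with δ*(q_I, X[0..i−1]) = q. Then for every q ∈ Q there exists π_q ≥ 0 such that for every μ-normal X ∈ A^ω, either V_q(n, X) is eventually constant, or V_q(n, X)/n → π_q with π_q > 0. -/
open Filter Topology

/-- Number of indices `i < n` at which the run of the automaton on `X` is in
state `q`. -/
def visits {Q A : Type*} [DecidableEq Q] (δ : Q → A → Q) (qI : Q) (X : ℕ → A)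
    (q : Q) (n : ℕ) : ℕ :=
  ((Finset.range n).filter (fun i => dstar δ qI (pref X i) = q)).card

/-- Expected value of `S` type functions over words of length `k`. -/
noncomputable def wexp {A : Type*} [Fintype A] (μ : A → ℝ) : ℕ → (List A → ℝ) → ℝ
  | 0, F => F []
  | k + 1, F => ∑ a, μ a * wexp μ k (fun w => F (a :: w))

/-- Block of length `k` at position `i`. -/
def blk {A : Type*} (X : ℕ → A) (i k : ℕ) : List A := (List.range k).map (fun j => X (i + j))

/-- Sum of `D` along the run. -/
def rsum {Q A : Type*} (δ : Q → A → Q) (D : Q → A → ℝ) : Q → List A → ℝ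
  | _, [] => 0
  | p, a :: w => D p a + rsum δ D (δ p a) w

lemma blk_cons {A : Type*} (X : ℕ → A) (i k : ℕ) :
    blk X i (k + 1) = X i :: blk X (i + 1) k := by
  unfold blk
  rw [List.range_succ_eq_map]
  simp only [List.map_cons, List.map_map, Nat.add_zero]
  congr 1
  apply List.map_congr_left
  intro j _
  simp only [Function.comp]
  congr 1
  omega

lemma blk_snoc {A : Type*} (X : ℕ → A) (i k : ℕ) :
    blk X i (k + 1) = blk X i k ++ [X (i + k)] := by
  simp [blk, List.range_succ]

lemma blk_zero {A : Type*} (X : ℕ → A) (i : ℕ) : blk X i 0 = [] := rfl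

lemma blk_length {A : Type*} (X : ℕ → A) (i k : ℕ) : (blk X i k).length = k := by
  simp [blk]

lemma pref_succ {A : Type*} (X : ℕ → A) (n : ℕ) : pref X (n + 1) = pref X n ++ [X n] := by
  simp [pref, List.range_succ]

lemma pref_add {A : Type*} (X : ℕ → A) (n k : ℕ) : pref X (n + k) = pref X n ++ blk X n k := by
  induction k with
  | zero => simp [blk_zero]
  | succ k ih => rw [← add_assoc, pref_succ, ih, blk_snoc, List.append_assoc]

lemma dstar_append {Q A : Type*} (δ : Q → A → Q) (q : Q) (u v : List A) :
    dstar δ q (u ++ v) = dstar δ (dstar δ q u) v := by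
  simp [dstar]

lemma dstar_succ {Q A : Type*} (δ : Q → A → Q) (q : Q) (X : ℕ → A) (n : ℕ) :
    dstar δ q (pref X (n + 1)) = δ (dstar δ q (pref X n)) (X n) := by
  rw [pref_succ, dstar_append]; rfl

lemma wexp_add {A : Type*} [Fintype A] (μ : A → ℝ) (k : ℕ) (F G : List A → ℝ) :
    wexp μ k (fun w => F w + G w) = wexp μ k F + wexp μ k G := by
  induction k generalizing F G with
  | zero => rfl
  | succ k ih => simp only [wexp, ih, mul_add, Finset.sum_add_distrib]

lemma wexp_smul {A : Type*} [Fintype A] (μ : A → ℝ) (k : ℕ) (c : ℝ) (F : List A → ℝ) :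
    wexp μ k (fun w => c * F w) = c * wexp μ k F := by
  induction k generalizing F with
  | zero => rfl
  | succ k ih =>
    simp only [wexp, ih, Finset.mul_sum]
    exact Finset.sum_congr rfl fun a _ => by ring

lemma wexp_const {A : Type*} [Fintype A] (μ : A → ℝ) (hμsum : ∑ a, μ a = 1) (k : ℕ) (c : ℝ) :
    wexp μ k (fun _ => c) = c := by
  induction k with
  | zero => rfl
  | succ k ih => simp only [wexp, ih, ← Finset.sum_mul, hμsum, one_mul]

lemma wexp_sum {A ι : Type*} [Fintype A] (μ : A → ℝ) (k : ℕ) (s : Finset ι)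
    (F : ι → List A → ℝ) :
    wexp μ k (fun w => ∑ i ∈ s, F i w) = ∑ i ∈ s, wexp μ k (F i) := by
  induction k generalizing F with
  | zero => rfl
  | succ k ih =>
    simp only [wexp, ih, Finset.mul_sum]
    rw [Finset.sum_comm]

section
variable {Q A : Type*} [Fintype A] (μ : A → ℝ) (hμpos : ∀ a, 0 < μ a) (hμsum : ∑ a, μ a = 1)
  (δ : Q → A → Q) (D : Q → A → ℝ)

lemma wexp_rsum (hD : ∀ p, ∑ a, μ a * D p a = 0) (hμsum : ∑ a, μ a = 1) (k : ℕ) (p : Q) :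
    wexp μ k (rsum δ D p) = 0 := by
  induction k generalizing p with
  | zero => rfl
  | succ k ih =>
    simp only [wexp, rsum, wexp_add, wexp_const μ hμsum]
    simp only [ih, add_zero, hD]

lemma wexp_rsum_sq (hμpos : ∀ a, 0 < μ a) (hD : ∀ p, ∑ a, μ a * D p a = 0)
    (hμsum : ∑ a, μ a = 1)
    (M : ℝ) (hM : ∀ p a, |D p a| ≤ M) (k : ℕ) (p : Q) :
    wexp μ k (fun w => rsum δ D p w ^ 2) ≤ k * M ^ 2 := by
  induction k generalizing p with
  | zero => simp [wexp, rsum]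
  | succ k ih =>
    have h1 : ∀ a, wexp μ k (fun w => rsum δ D p (a :: w) ^ 2) ≤ M ^ 2 + k * M ^ 2 := by
      intro a
      have : (fun w => rsum δ D p (a :: w) ^ 2) = fun w =>
          (D p a ^ 2 + (2 * D p a) * rsum δ D (δ p a) w) + rsum δ D (δ p a) w ^ 2 := by
        funext w; simp only [rsum]; ring
      rw [this, wexp_add, wexp_add, wexp_const μ hμsum, wexp_smul, wexp_rsum μ δ D hD hμsum]
      have h2 : D p a ^ 2 ≤ M ^ 2 := sq_le_sq' (abs_le.1 (hM p a)).1 (abs_le.1 (hM p a)).2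
      have := ih (δ p a)
      linarith
    calc wexp μ (k + 1) (fun w => rsum δ D p w ^ 2)
        ≤ ∑ a, μ a * (M ^ 2 + k * M ^ 2) :=
          Finset.sum_le_sum fun a _ => mul_le_mul_of_nonneg_left (h1 a) (hμpos a).le
      _ = _ := by rw [← Finset.sum_mul, hμsum]; push_cast; ring
end

lemma base_freq {A : Type*} [DecidableEq A] (μ : A → ℝ) (X : ℕ → A) (hX : BNormal μ X)
    (u : List A) :
    Tendsto (fun n : ℕ => (∑ i ∈ Finset.range n, if blk X i u.length = u then (1 : ℝ) else 0) / n)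
      atTop (𝓝 (wmeas μ u)) := by
  by_cases hu : u = []
  · subst hu
    refine Tendsto.congr' ?_ tendsto_const_nhds
    filter_upwards [eventually_gt_atTop 0] with n hn
    have : (n : ℝ) ≠ 0 := by positivity
    simp [wmeas, blk, this]
  · have h := hX u hu
    have hl : 0 < u.length := List.length_pos_iff.2 hu
    have h2 : Tendsto (fun n : ℕ => n + u.length - 2) atTop atTop := by
      apply tendsto_atTop_atTop.2
      intro b
      exact ⟨b + 2, fun a ha => by omega⟩
    refine (h.comp h2).congr' ?_
    filter_upwards [eventually_gt_atTop 0] with n hn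
    have e : n + u.length - 2 + 2 - u.length = n := by omega
    simp only [Function.comp, freq, nbocc, e, blk]
    congr 1
    rw [Finset.card_filter]
    push_cast
    rfl

lemma avg_freq {A : Type*} [DecidableEq A] [Fintype A] (μ : A → ℝ) (X : ℕ → A)
    (hX : BNormal μ X) (k : ℕ) (u : List A) (F : List A → ℝ) :
    Tendsto (fun n : ℕ => (∑ i ∈ Finset.range n,
      (if blk X i u.length = u then (1 : ℝ) else 0) * F (blk X (i + u.length) k)) / n)
      atTop (𝓝 (wmeas μ u * wexp μ k F)) := by
  induction k generalizing u F with
  | zero =>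
    simp only [blk_zero, wexp, ← Finset.sum_mul]
    refine ((base_freq μ X hX u).mul_const (F [])).congr fun n => ?_
    ring
  | succ k ih =>
    have h := tendsto_finsetSum (Finset.univ : Finset A)
      (fun a _ => ih (u ++ [a]) (fun w => F (a :: w)))
    have e : ∑ a, wmeas μ (u ++ [a]) * wexp μ k (fun w => F (a :: w))
        = wmeas μ u * wexp μ (k + 1) F := by
      simp only [wexp, Finset.mul_sum, wmeas, List.map_append, List.prod_append, List.map_cons,
        List.map_nil, List.prod_singleton, mul_assoc]
    rw [e] at h
    refine h.congr fun n => ?_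
    rw [← Finset.sum_div, Finset.sum_comm]
    congr 1
    refine Finset.sum_congr rfl fun i _ => ?_
    rw [Finset.sum_eq_single (X (i + u.length))]
    · rw [blk_cons X (i + u.length) k]
      simp only [List.length_append, List.length_singleton, blk_snoc, ← add_assoc, List.append_cancel_right_eq]
    · intro a _ ha
      have : blk X i (u ++ [a]).length ≠ u ++ [a] := by
        simp only [List.length_append, List.length_singleton, blk_snoc]
        intro h
        have := List.append_inj_right' h rfl
        simp at this
        exact ha this.symm
      rw [if_neg this, zero_mul]
    · simp

lemma avg_freq' {A : Type*} [DecidableEq A] [Fintype A] (μ : A → ℝ) (X : ℕ → A)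
    (hX : BNormal μ X) (k : ℕ) (F : List A → ℝ) :
    Tendsto (fun n : ℕ => (∑ i ∈ Finset.range n, F (blk X i k)) / n) atTop (𝓝 (wexp μ k F)) := by
  have := avg_freq μ X hX k [] F
  simpa [wmeas, blk_zero] using this

lemma martingale_avg {Q A : Type*} [Fintype Q] [Fintype A] [DecidableEq A]
    (μ : A → ℝ) (hμpos : ∀ a, 0 < μ a) (hμsum : ∑ a, μ a = 1)
    (δ : Q → A → Q) (qI : Q) (D : Q → A → ℝ) (hD : ∀ p, ∑ a, μ a * D p a = 0)
    (X : ℕ → A) (hX : BNormal μ X) :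
    Tendsto (fun n : ℕ => (∑ i ∈ Finset.range n, D (dstar δ qI (pref X i)) (X i)) / (n : ℝ))
      atTop (𝓝 0) := by
  obtain ⟨M, hM0, hM⟩ : ∃ M : ℝ, 0 ≤ M ∧ ∀ p a, |D p a| ≤ M := by
    refine ⟨∑ p, ∑ a, |D p a|, by positivity, fun p a => ?_⟩
    calc |D p a| ≤ ∑ a, |D p a| :=
          Finset.single_le_sum (f := fun a => |D p a|) (fun _ _ => abs_nonneg _)
            (Finset.mem_univ a)
      _ ≤ _ := Finset.single_le_sum (f := fun p => ∑ a, |D p a|)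
            (fun _ _ => Finset.sum_nonneg fun _ _ => abs_nonneg _) (Finset.mem_univ p)
  set s : ℕ → Q := fun i => dstar δ qI (pref X i) with hs
  set T : ℕ → ℝ := fun n => ∑ i ∈ Finset.range n, D (s i) (X i) with hT
  have hTS : ∀ k i, T (i + k) - T i = rsum δ D (s i) (blk X i k) := by
    intro k
    induction k with
    | zero => intro i; simp [blk_zero, rsum]
    | succ k ih =>
      intro i
      have h1 := ih (i + 1)
      have h2 : T (i + 1) = T i + D (s i) (X i) := Finset.sum_range_succ _ _
      have h3 : s (i + 1) = δ (s i) (X i) := dstar_succ _ _ _ _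
      rw [blk_cons, rsum, ← h3, ← h1, show i + (k + 1) = i + 1 + k by ring, h2]
      ring
  have hTb : ∀ k i, |T (i + k) - T i| ≤ k * M := by
    intro k i
    have : T (i + k) - T i = ∑ j ∈ Finset.range k, D (s (i + j)) (X (i + j)) := by
      simp only [hT, Finset.sum_range_add, add_sub_cancel_left]
    rw [this]
    refine (Finset.abs_sum_le_sum_abs _ _).trans ?_
    refine (Finset.sum_le_sum fun j _ => hM _ _).trans ?_
    simp
  have hsum : ∀ k n, ∑ i ∈ Finset.range n, (T (i + k) - T i)
      = ∑ j ∈ Finset.range k, (T (n + j) - T j) := by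
    intro k n
    simp only [Finset.sum_sub_distrib]
    have h1 := Finset.sum_range_add T n k
    have h2 := Finset.sum_range_add T k n
    rw [add_comm k n] at h2
    have h3 : ∑ i ∈ Finset.range n, T (i + k) = ∑ i ∈ Finset.range n, T (k + i) :=
      Finset.sum_congr rfl fun i _ => by rw [add_comm]
    linarith
  have hkT : ∀ k n : ℕ, k * |T n| ≤ (∑ i ∈ Finset.range n, |T (i + k) - T i|) + 2 * k * k * M := by
    intro k n
    have h1 : (k : ℝ) * T n = ∑ i ∈ Finset.range n, (T (i + k) - T i)
        - ∑ j ∈ Finset.range k, ((T (n + j) - T n) - (T (0 + j) - T 0)) := by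
      rw [hsum, ← Finset.sum_sub_distrib]
      have : ∀ j ∈ Finset.range k, (T (n + j) - T j - (T (n + j) - T n - (T (0 + j) - T 0)))
        = T n := by
        intro j _
        have : T 0 = 0 := by simp [hT]
        rw [zero_add, this]; ring
      rw [Finset.sum_congr rfl this]; simp
    have h2 : |∑ j ∈ Finset.range k, ((T (n + j) - T n) - (T (0 + j) - T 0))| ≤ 2 * k * k * M := by
      refine (Finset.abs_sum_le_sum_abs _ _).trans ?_
      have : ∀ j ∈ Finset.range k, |(T (n + j) - T n) - (T (0 + j) - T 0)| ≤ 2 * k * M := by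
        intro j hj
        have hj' : (j : ℝ) ≤ k := by exact_mod_cast (Finset.mem_range.1 hj).le
        have a1 := hTb j n
        have a2 := hTb j 0
        have a3 := abs_sub (T (n + j) - T n) (T (0 + j) - T 0)
        have a4 : (j : ℝ) * M ≤ k * M := mul_le_mul_of_nonneg_right hj' hM0
        linarith
      refine (Finset.sum_le_sum this).trans ?_
      simp only [Finset.sum_const, Finset.card_range, nsmul_eq_mul]
      apply le_of_eq; ring
    have h3 := Finset.abs_sum_le_sum_abs (fun i => T (i + k) - T i) (Finset.range n)
    have h4 : (k : ℝ) * |T n| = |(k : ℝ) * T n| := by rw [abs_mul, Nat.abs_cast]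
    rw [h4, h1]
    have h5 := abs_sub (∑ i ∈ Finset.range n, (T (i + k) - T i))
      (∑ j ∈ Finset.range k, ((T (n + j) - T n) - (T (0 + j) - T 0)))
    linarith
  rw [Metric.tendsto_atTop']
  intro ε hε
  -- choose k
  set e := ε / 4 with he
  have he0 : 0 < e := by positivity
  obtain ⟨k, hk⟩ := exists_nat_gt (Fintype.card Q * M ^ 2 / (e * e))
  have hk0 : (0 : ℝ) < k := lt_of_le_of_lt (by positivity) hk
  set F : List A → ℝ := fun w => ∑ p, rsum δ D p w ^ 2 with hF
  have hEF : wexp μ k F ≤ Fintype.card Q * (k * M ^ 2) := by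
    rw [hF, wexp_sum]
    refine (Finset.sum_le_sum fun p _ => wexp_rsum_sq μ δ D hμpos hD hμsum M hM k p).trans ?_
    simp
  have hEF2 : wexp μ k F < e * e * k * k := by
    rw [div_lt_iff₀ (by positivity)] at hk
    nlinarith
  have hav := avg_freq' μ X hX k F
  have ev1 := hav.eventually_lt_const hEF2
  have ev2 : Tendsto (fun n : ℕ => (2 * k * k * M) / (n : ℝ)) atTop (𝓝 0) :=
    tendsto_const_div_atTop_nhds_zero_nat _
  have ev3 := ev2.eventually_lt_const (show (0 : ℝ) < k * e by positivity)
  obtain ⟨N, hN⟩ := eventually_atTop.1 (ev1.and (ev3.and (eventually_gt_atTop 0)))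
  refine ⟨N, fun n hn => ?_⟩
  obtain ⟨b1, b2, b3⟩ := hN n hn.le
  have hn0 : (0 : ℝ) < n := by exact_mod_cast b3
  have pt : ∀ i ∈ Finset.range n, |T (i + k) - T i| ≤ (1 / (e * k)) * F (blk X i k) + e * k := by
    intro i _
    rw [hTS]
    set x := rsum δ D (s i) (blk X i k) with hx
    have hxF : x ^ 2 ≤ F (blk X i k) :=
      Finset.single_le_sum (f := fun p => rsum δ D p (blk X i k) ^ 2)
        (fun _ _ => sq_nonneg _) (Finset.mem_univ (s i))
    have hek : 0 < e * k := by positivity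
    have : |x| ≤ (1 / (e * k)) * x ^ 2 + e * k := by
      rw [← sq_abs x]
      have : (1 / (e * k)) * |x| ^ 2 + e * k - |x|
        = (1 / (e * k)) * ((|x| - e * k / 2) ^ 2 + 3 / 4 * (e * k) ^ 2) := by
        field_simp; ring
      have h0 : 0 ≤ (1 / (e * k)) * ((|x| - e * k / 2) ^ 2 + 3 / 4 * (e * k) ^ 2) := by positivity
      linarith
    have h2 : (1 / (e * k)) * x ^ 2 ≤ (1 / (e * k)) * F (blk X i k) :=
      mul_le_mul_of_nonneg_left hxF (by positivity)
    linarith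
  have tot := (hkT k n).trans (add_le_add_left (Finset.sum_le_sum pt) _)
  rw [Finset.sum_add_distrib, ← Finset.mul_sum] at tot
  simp only [Finset.sum_const, Finset.card_range, nsmul_eq_mul] at tot
  rw [div_lt_iff₀ hn0] at b1 b2
  have b1' : (1 / (e * k)) * ∑ i ∈ Finset.range n, F (blk X i k) ≤ e * k * n := by
    calc _ ≤ (1 / (e * k)) * (e * e * k * k * n) :=
          mul_le_mul_of_nonneg_left b1.le (by positivity)
      _ = _ := by field_simp
  have fin : (k : ℝ) * |T n| < k * (ε * n) := by
    have : 0 < (k : ℝ) * (e * n) := by positivity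
    have e4 : ε = 4 * e := by rw [he]; ring
    rw [e4]
    nlinarith
  have fin2 := lt_of_mul_lt_mul_left fin hk0.le
  rw [Real.dist_eq, sub_zero, abs_div, Nat.abs_cast, div_lt_iff₀ hn0]
  exact fin2

lemma superharm_const {Q A : Type*} [Finite Q] [Fintype A]
    (μ : A → ℝ) (hμpos : ∀ a, 0 < μ a) (hμsum : ∑ a, μ a = 1)
    (δ : Q → A → Q) (hc : ∀ p r : Q, ∃ w, dstar δ p w = r)
    (g : Q → ℝ) (hg : ∀ p, ∑ a, μ a * g (δ p a) ≤ g p) (p r : Q) : g p = g r := by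
  have : Nonempty Q := ⟨p⟩
  obtain ⟨m, hm⟩ := Finite.exists_min g
  have step : ∀ p, g p = g m → ∀ a, g (δ p a) = g m := by
    intro p hp a
    have h0 : ∑ a, μ a * (g (δ p a) - g m) ≤ 0 := by
      simp only [mul_sub, Finset.sum_sub_distrib, ← Finset.sum_mul, hμsum]
      have := hg p
      linarith
    have hnn : ∀ a ∈ Finset.univ, 0 ≤ μ a * (g (δ p a) - g m) := fun a _ =>
      mul_nonneg (hμpos a).le (sub_nonneg.2 (hm _))
    have h1 := (Finset.sum_eq_zero_iff_of_nonneg hnn).1 (le_antisymm h0 (Finset.sum_nonneg hnn)) a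
      (Finset.mem_univ a)
    have := (mul_eq_zero.1 h1).resolve_left (hμpos a).ne'
    linarith
  have all : ∀ (w : List A) p, g p = g m → g (dstar δ p w) = g m := by
    intro w
    induction w with
    | nil => intro p hp; exact hp
    | cons a w ih => intro p hp; exact ih _ (step p hp a)
  obtain ⟨w, hw⟩ := hc m p
  obtain ⟨v, hv⟩ := hc m r
  rw [← hw, ← hv, all w m rfl, all v m rfl]

lemma poisson {Q A : Type*} [Finite Q] [DecidableEq Q] [Fintype A]
    (μ : A → ℝ) (hμpos : ∀ a, 0 < μ a) (hμsum : ∑ a, μ a = 1)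
    (δ : Q → A → Q) (hc : ∀ p r : Q, ∃ w, dstar δ p w = r) (q : Q) :
    ∃ (c : ℝ) (g : Q → ℝ), 0 < c ∧
      ∀ p, (if p = q then (1 : ℝ) else 0) = g p - ∑ a, μ a * g (δ p a) + c := by
  let Ψ : (Q → ℝ) →ₗ[ℝ] (Q → ℝ) :=
    { toFun := fun g p => g p - ∑ a, μ a * g (δ p a) + g q
      map_add' := by
        intro f g; funext p
        simp only [Pi.add_apply, mul_add, Finset.sum_add_distrib]; ring
      map_smul' := by
        intro t g; funext p
        simp only [Pi.smul_apply, smul_eq_mul, RingHom.id_apply, mul_add, mul_sub, Finset.mul_sum]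
        congr 2
        exact Finset.sum_congr rfl fun a _ => by ring }
  have hΨ : ∀ g p, Ψ g p = g p - ∑ a, μ a * g (δ p a) + g q := fun _ _ => rfl
  have key : ∀ g, (∀ p, Ψ g p = 0) → g q ≤ 0 → g = 0 := by
    intro g h0 hq
    have hcst := superharm_const μ hμpos hμsum δ hc g (fun p => by
      have := h0 p; rw [hΨ] at this; linarith)
    have h1 := h0 q
    rw [hΨ, Finset.sum_congr rfl (fun a _ => by rw [hcst (δ q a) q]), ← Finset.sum_mul, hμsum]
      at h1
    funext p
    rw [hcst p q]; simp only [Pi.zero_apply]; linarith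
  have inj : Function.Injective Ψ := by
    rw [← LinearMap.ker_eq_bot, LinearMap.ker_eq_bot']
    intro g hg
    rcases le_total (g q) 0 with h | h
    · exact key g (fun p => by rw [hg]; rfl) h
    · have := key (-g) (fun p => by rw [map_neg, hg]; simp) (by simpa using h)
      simpa using this
  obtain ⟨g, hg⟩ := LinearMap.injective_iff_surjective.1 inj (fun p => if p = q then (1 : ℝ) else 0)
  have hg' : ∀ p, (if p = q then (1 : ℝ) else 0) = g p - ∑ a, μ a * g (δ p a) + g q := by
    intro p; rw [← hΨ, hg]
  refine ⟨g q, g, ?_, hg'⟩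
  by_contra hneg
  have hcst := superharm_const μ hμpos hμsum δ hc g (fun p => by
    have := hg' p
    have h2 : (0 : ℝ) ≤ if p = q then (1 : ℝ) else 0 := by split_ifs <;> norm_num
    linarith)
  have h1 := hg' q
  rw [Finset.sum_congr rfl (fun a _ => by rw [hcst (δ q a) q]), ← Finset.sum_mul, hμsum,
    if_pos rfl] at h1
  linarith

lemma word_occurs {A : Type*} [DecidableEq A] (μ : A → ℝ) (hμpos : ∀ a, 0 < μ a)
    (X : ℕ → A) (hX : BNormal μ X) (u : List A) : ∃ i, blk X i u.length = u := by
  by_contra hne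
  push Not at hne
  have h := base_freq μ X hX u
  simp only [hne, if_false, Finset.sum_const_zero, zero_div] at h
  have h1 := tendsto_nhds_unique h tendsto_const_nhds
  have h2 : 0 < wmeas μ u := by
    apply List.prod_pos
    intro x hx
    obtain ⟨a, _, rfl⟩ := List.mem_map.1 hx
    exact hμpos a
  linarith

lemma visits_const {Q A : Type*} [DecidableEq Q] (δ : Q → A → Q) (qI : Q) (X : ℕ → A) (q : Q)
    (N : ℕ) (h : ∀ i, N ≤ i → dstar δ qI (pref X i) ≠ q) :
    ∀ n, N ≤ n → visits δ qI X q n = visits δ qI X q N := by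
  intro n hn
  unfold visits
  congr 1
  ext i
  simp only [Finset.mem_filter, Finset.mem_range]
  constructor
  · rintro ⟨_, h2⟩
    exact ⟨by by_contra hh; exact h i (by omega) h2, h2⟩
  · rintro ⟨h1, h2⟩
    exact ⟨by omega, h2⟩

lemma escape_word {Q A : Type*} [DecidableEq Q] (δ : Q → A → Q) (q : Q)
    (u : List A) (hu : ∀ v, dstar δ (dstar δ q u) v ≠ q) (S : Finset Q) :
    ∃ w, ∀ r ∈ S, ∀ v, dstar δ (dstar δ r w) v ≠ q := by
  induction S using Finset.induction_on with
  | empty => exact ⟨[], by simp⟩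
  | insert r S _ ih =>
    obtain ⟨w, hw⟩ := ih
    by_cases h : ∀ v, dstar δ (dstar δ r w) v ≠ q
    · refine ⟨w, fun r' hr' => ?_⟩
      rcases Finset.mem_insert.1 hr' with rfl | h'
      · exact h
      · exact hw r' h'
    · push Not at h
      obtain ⟨v, hv⟩ := h
      refine ⟨w ++ (v ++ u), fun r' hr' v' => ?_⟩
      rcases Finset.mem_insert.1 hr' with rfl | h'
      · rw [dstar_append, dstar_append, hv]
        exact hu v'
      · rw [dstar_append, ← dstar_append]
        exact hw r' h' _

/-- on `μ`-normal input, each state of a DFA is visited either finitely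
often or with a fixed positive asymptotic frequency `π_q` independent of the normal
input sequence. -/
theorem state_visit_frequency
    {Q A : Type*} [Fintype Q] [DecidableEq Q] [Fintype A] [DecidableEq A]
    (μ : A → ℝ) (hμpos : ∀ a, 0 < μ a) (hμsum : ∑ a, μ a = 1)
    (δ : Q → A → Q) (qI : Q) :
    ∀ q : Q, ∃ πq : ℝ, 0 ≤ πq ∧
      ∀ X : ℕ → A, BNormal μ X →
        (∃ N, ∀ n, N ≤ n → visits δ qI X q n = visits δ qI X q N) ∨
        (0 < πq ∧
          Tendsto (fun n => (visits δ qI X q n : ℝ) / n) atTop (𝓝 πq)) := by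
  intro q
  by_cases hrec : ∀ u, ∃ v, dstar δ (dstar δ q u) v = q
  swap
  · push Not at hrec
    obtain ⟨u, hu⟩ := hrec
    obtain ⟨w, hw⟩ := escape_word δ q u hu Finset.univ
    refine ⟨0, le_rfl, fun X hX => Or.inl ?_⟩
    obtain ⟨i, hi⟩ := word_occurs μ hμpos X hX w
    refine ⟨i + w.length, visits_const δ qI X q _ fun j hj => ?_⟩
    obtain ⟨d, rfl⟩ := Nat.exists_eq_add_of_le hj
    rw [pref_add, pref_add, hi, dstar_append, dstar_append]
    exact hw _ (Finset.mem_univ _) _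
  · let C := {p : Q // ∃ w, dstar δ q w = p}
    let δC : C → A → C := fun p a => ⟨δ p.1 a, by
      obtain ⟨w, hw⟩ := p.2
      exact ⟨w ++ [a], by rw [dstar_append, hw]; rfl⟩⟩
    have hval : ∀ (w : List A) (p : C), (dstar δC p w).1 = dstar δ p.1 w := by
      intro w
      induction w with
      | nil => intro p; rfl
      | cons a w ih => intro p; exact ih (δC p a)
    have hcC : ∀ p r : C, ∃ w, dstar δC p w = r := by
      rintro ⟨p, u, rfl⟩ ⟨r, v, rfl⟩
      obtain ⟨z, hz⟩ := hrec u
      refine ⟨z ++ v, Subtype.ext ?_⟩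
      rw [hval, dstar_append, hz]
    obtain ⟨c, g, hc0, hg⟩ := poisson μ hμpos hμsum δC hcC ⟨q, [], rfl⟩
    refine ⟨c, hc0.le, fun X hX => ?_⟩
    by_cases hvis : ∃ i, dstar δ qI (pref X i) = q
    swap
    · push Not at hvis
      exact Or.inl ⟨0, visits_const δ qI X q 0 fun i _ => hvis i⟩
    refine Or.inr ⟨hc0, ?_⟩
    obtain ⟨N, hN⟩ := hvis
    classical
    let G : Q → ℝ := fun p => if h : ∃ w, dstar δ q w = p then g ⟨p, h⟩ else 0
    have hG : ∀ p : C, G p.1 = g p := fun p => dif_pos p.2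
    let D : Q → A → ℝ := fun p a => G (δ p a) - ∑ b, μ b * G (δ p b)
    have hD : ∀ p, ∑ a, μ a * D p a = 0 := by
      intro p
      simp only [D, mul_sub, Finset.sum_sub_distrib, ← Finset.sum_mul, hμsum, one_mul, sub_self]
    have hmart := martingale_avg μ hμpos hμsum δ qI D hD X hX
    set s : ℕ → Q := fun i => dstar δ qI (pref X i) with hs
    have hstep : ∀ i, N ≤ i → (if s i = q then (1 : ℝ) else 0) =
        G (s i) - G (s (i + 1)) + D (s i) (X i) + c := by
      intro i hi
      obtain ⟨d, rfl⟩ := Nat.exists_eq_add_of_le hi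
      have hmem : ∃ w, dstar δ q w = s (N + d) :=
        ⟨blk X N d, by simp only [hs]; rw [pref_add, dstar_append, hN]⟩
      have h1 := hg ⟨s (N + d), hmem⟩
      have h2 : s (N + d + 1) = δ (s (N + d)) (X (N + d)) := dstar_succ _ _ _ _
      have h3 : ∀ a, G (δ (s (N + d)) a) = g (δC ⟨s (N + d), hmem⟩ a) :=
        fun a => hG (δC ⟨s (N + d), hmem⟩ a)
      have h4 : G (s (N + d)) = g ⟨s (N + d), hmem⟩ := hG ⟨s (N + d), hmem⟩
      have h5 := (if_congr (Subtype.ext_iff (a1 := (⟨s (N + d), hmem⟩ : C))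
        (a2 := ⟨q, [], rfl⟩)) (rfl : (1 : ℝ) = 1) (rfl : (0 : ℝ) = 0)).symm.trans h1
      refine h5.trans ?_
      rw [h2]
      simp only [D, h3, h4]
      ring
    -- telescoping
    set V : ℕ → ℝ := fun n => (visits δ qI X q n : ℝ) with hV
    have hVs : ∀ n, V n = ∑ i ∈ Finset.range n, if s i = q then (1 : ℝ) else 0 := by
      intro n
      simp only [hV, visits, Finset.card_filter]
      push_cast
      rfl
    set T : ℕ → ℝ := fun n => ∑ i ∈ Finset.range n, D (s i) (X i) with hT
    have hconst : ∀ n, N ≤ n → V n = T n + c * n - G (s n) + (V N - T N - c * N + G (s N)) := by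
      intro n hn
      induction n, hn using Nat.le_induction with
      | base => ring
      | succ n hn ih =>
        have h1 : V (n + 1) = V n + if s n = q then (1 : ℝ) else 0 := by
          rw [hVs, hVs, Finset.sum_range_succ]
        have h2 : T (n + 1) = T n + D (s n) (X n) := Finset.sum_range_succ _ _
        rw [h1, ih, hstep n hn, h2]
        push_cast
        ring
    have hGlim : Tendsto (fun n : ℕ => G (s n) / (n : ℝ)) atTop (𝓝 0) := by
      have hb : ∀ p, |G p| ≤ ∑ p, |G p| := fun p =>
        Finset.single_le_sum (f := fun p => |G p|) (fun _ _ => abs_nonneg _) (Finset.mem_univ p)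
      refine squeeze_zero_norm (a := fun n : ℕ => (∑ p, |G p|) / (n : ℝ)) (fun n => ?_)
        (tendsto_const_div_atTop_nhds_zero_nat _)
      rw [Real.norm_eq_abs, abs_div, Nat.abs_cast]
      exact div_le_div_of_nonneg_right (hb _) (Nat.cast_nonneg n)
    have hKlim : Tendsto (fun n : ℕ => (V N - T N - c * N + G (s N)) / (n : ℝ)) atTop (𝓝 0) :=
      tendsto_const_div_atTop_nhds_zero_nat _
    have hall := ((hmart.add_const c).sub hGlim).add hKlim
    rw [zero_add, sub_zero, add_zero] at hall
    refine hall.congr' ?_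
    filter_upwards [eventually_ge_atTop N, eventually_gt_atTop 0] with n hn hn0
    have hn0' : (n : ℝ) ≠ 0 := by positivity
    have := hconst n hn
    simp only [hV] at this ⊢
    rw [this]
    change T n / n + c - G (s n) / n + _ = _
    field_simp
end
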